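/- Let 0 < a < b and I = [a,b]. Suppose v is a nonnegative measurable function on (0,∞)∖I with ∫_{(0,∞)∖I} v(t)|σ(t)| dt < ∞ and (2/π)∫_{(0,∞)∖I} t·v(t)·σ(t) dt = α with α < 0. Then for every ω ∈ (a,b): ℋ_I(σv)(ω) ≥ (1/π)∫₀^a v(t)·σ(t)·2t/(t²−ω²) dt ≥ |α|/ω². -/

import Mathlib

open MeasureTheory Set
open scoped ENNReal

/-- The function `σ` on `(0,∞) ∖ [a,b]`:
`σ(t) = -1/√((b²-t²)(a²-t²))` for `0 < t < a`, and
`σ(t) = 1/√((t²-b²)(t²-a²))` for `t > b`. -/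
noncomputable def sigmaOut (a b t : ℝ) : ℝ :=
  if t < a then -(1 / Real.sqrt ((b ^ 2 - t ^ 2) * (a ^ 2 - t ^ 2)))
  else 1 / Real.sqrt ((t ^ 2 - b ^ 2) * (t ^ 2 - a ^ 2))

/-! The density `v σ` changes sign across the gap `[a,b]` exactly as the kernel
`K t = 2t/(t² - ω²)` does, so the part of `ℋ_I(σv)(ω)` over `(b,∞)` is nonnegative. On `(0,a)` we
have `K t ≤ -2t/ω²` and `v σ ≤ 0`, so the part over `(0,a)` is at least `-2/(πω²)` times the first
moment of `v σ` over `(0,a)`, and that moment is at most the full one because `v σ ≥ 0` on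
`(b,∞)`. -/

theorem sigmaOut_nonpos {a b t : ℝ} (ht : t < a) : sigmaOut a b t ≤ 0 := by
  rw [sigmaOut, if_pos ht, neg_nonpos]
  positivity

theorem sigmaOut_nonneg {a b t : ℝ} (ht : a ≤ t) : 0 ≤ sigmaOut a b t := by
  rw [sigmaOut, if_neg ht.not_gt]
  positivity

theorem Ioo_subset_Ioi_sdiff_Icc {α : Type*} [Preorder α] {a b c : α} :
    Ioo c a ⊆ Ioi c \ Icc a b :=
  fun _ ht => ⟨ht.1, fun h => ht.2.not_ge h.1⟩

theorem Ioi_subset_Ioi_sdiff_Icc {α : Type*} [Preorder α] {a b c : α} (hcb : c ≤ b) :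
    Ioi b ⊆ Ioi c \ Icc a b :=
  fun _ ht => ⟨hcb.trans_lt ht, fun h => h.2.not_gt ht⟩

theorem lt_or_lt_of_mem_Ioi_sdiff_Icc {α : Type*} [LinearOrder α] {a b c t : α}
    (ht : t ∈ Ioi c \ Icc a b) : t < a ∨ b < t := by
  simpa only [mem_Icc, not_and_or, not_le] using ht.2

/-- The kernel of the Hilbert transform at `ω` of an odd function, folded onto `(0,∞)`:
`2t/(t² - ω²) = 1/(t - ω) + 1/(t + ω)`. The factor `1/π` is left out. -/
noncomputable def hilbertKernel (ω t : ℝ) : ℝ :=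
  2 * t / (t ^ 2 - ω ^ 2)

theorem hilbertKernel_nonneg {ω t : ℝ} (hω : 0 ≤ ω) (hωt : ω ≤ t) : 0 ≤ hilbertKernel ω t :=
  div_nonneg (mul_nonneg zero_le_two (hω.trans hωt))
    (sub_nonneg.2 (pow_le_pow_left₀ hω hωt 2))

theorem hilbertKernel_le_neg_two_div_sq_mul {ω t : ℝ} (ht : 0 ≤ t) (htω : t < ω) :
    hilbertKernel ω t ≤ -(2 / ω ^ 2) * t := by
  have hpos : 0 < ω ^ 2 - t ^ 2 := sub_pos.2 (pow_lt_pow_left₀ htω ht two_ne_zero)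
  calc hilbertKernel ω t = -(2 * t / (ω ^ 2 - t ^ 2)) := by
        rw [hilbertKernel, ← div_neg, neg_sub]
    _ ≤ -(2 * t / ω ^ 2) := by
        gcongr
        exact sub_le_self _ (sq_nonneg t)
    _ = -(2 / ω ^ 2) * t := by ring

section SignedDensity

variable {a b ω : ℝ} {f : ℝ → ℝ} {μ : Measure ℝ}

theorem setIntegral_Ioo_le_setIntegral_Ioi_sdiff_Icc {c : ℝ}
    (hf : IntegrableOn f (Ioi c \ Icc a b) μ) (hf_nonneg : ∀ t ∈ Ioi b, 0 ≤ f t) :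
    ∫ t in Ioo c a, f t ∂μ ≤ ∫ t in Ioi c \ Icc a b, f t ∂μ := by
  have hU : MeasurableSet (Ioi c \ Icc a b) := measurableSet_Ioi.diff measurableSet_Icc
  rw [← sub_nonneg, ← setIntegral_sdiff measurableSet_Ioo hf Ioo_subset_Ioi_sdiff_Icc]
  refine setIntegral_nonneg (hU.diff measurableSet_Ioo) fun t ht => hf_nonneg t ?_
  exact (lt_or_lt_of_mem_Ioi_sdiff_Icc ht.1).resolve_left fun hta => ht.2 ⟨ht.1.1, hta⟩

theorem min_sq_sub_sq_le_abs_sq_sub_sq {t : ℝ} (hb : 0 ≤ b)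
    (ht : t ∈ Ioi 0 \ Icc a b) :
    min (ω ^ 2 - a ^ 2) (b ^ 2 - ω ^ 2) ≤ |t ^ 2 - ω ^ 2| := by
  rcases lt_or_lt_of_mem_Ioi_sdiff_Icc ht with hta | hbt
  · have hsq : t ^ 2 ≤ a ^ 2 := pow_le_pow_left₀ (mem_Ioi.1 ht.1).le hta.le 2
    exact (min_le_left _ _).trans (le_trans (by linarith) (neg_le_abs _))
  · have hsq : b ^ 2 ≤ t ^ 2 := pow_le_pow_left₀ hb hbt.le 2
    exact (min_le_right _ _).trans (le_trans (by linarith) (le_abs_self _))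

theorem integrableOn_mul_hilbertKernel (ha : 0 ≤ a) (hω : ω ∈ Ioo a b)
    (hf : IntegrableOn (fun t => t * f t) (Ioi 0 \ Icc a b) μ) :
    IntegrableOn (fun t => f t * hilbertKernel ω t) (Ioi 0 \ Icc a b) μ := by
  have hω0 : 0 < ω := ha.trans_lt hω.1
  have hU : MeasurableSet (Ioi 0 \ Icc a b) := measurableSet_Ioi.diff measurableSet_Icc
  have hdist : 0 < min (ω ^ 2 - a ^ 2) (b ^ 2 - ω ^ 2) :=
    lt_min (sub_pos.2 (pow_lt_pow_left₀ hω.1 ha two_ne_zero))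
      (sub_pos.2 (pow_lt_pow_left₀ hω.2 hω0.le two_ne_zero))
  have hmeas : Measurable fun t : ℝ => 2 / (t ^ 2 - ω ^ 2) := by fun_prop
  have hbdd : ∀ t ∈ Ioi 0 \ Icc a b,
      ‖2 / (t ^ 2 - ω ^ 2)‖ ≤ 2 / min (ω ^ 2 - a ^ 2) (b ^ 2 - ω ^ 2) := fun t ht => by
    rw [Real.norm_eq_abs, abs_div, abs_two]
    gcongr
    exact min_sq_sub_sq_le_abs_sq_sub_sq (hω0.trans hω.2).le ht
  have hprod : IntegrableOn (fun t => t * f t * (2 / (t ^ 2 - ω ^ 2))) (Ioi 0 \ Icc a b) μ :=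
    Integrable.mul_bdd hf hmeas.aestronglyMeasurable
      (ae_restrict_of_forall_mem hU hbdd)
  refine hprod.congr_fun (fun t _ => ?_) hU
  simp only [hilbertKernel]
  ring

theorem neg_two_div_sq_mul_setIntegral_Ioo_le (hω : a ≤ ω) (hf_nonpos : ∀ t ∈ Ioo 0 a, f t ≤ 0)
    (hmoment : IntegrableOn (fun t => t * f t) (Ioo 0 a) μ)
    (hkernel : IntegrableOn (fun t => f t * hilbertKernel ω t) (Ioo 0 a) μ) :
    -(2 / ω ^ 2) * ∫ t in Ioo 0 a, t * f t ∂μ ≤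
      ∫ t in Ioo 0 a, f t * hilbertKernel ω t ∂μ := by
  rw [← integral_const_mul]
  refine setIntegral_mono_on (hmoment.const_mul _) hkernel measurableSet_Ioo fun t ht => ?_
  calc -(2 / ω ^ 2) * (t * f t) = f t * (-(2 / ω ^ 2) * t) := by ring
    _ ≤ f t * hilbertKernel ω t :=
      mul_le_mul_of_nonpos_left (hilbertKernel_le_neg_two_div_sq_mul ht.1.le (ht.2.trans_le hω))
        (hf_nonpos t ht)

theorem setIntegral_Ioo_mul_hilbertKernel_le (ha : 0 ≤ a) (hω : ω ∈ Ioo a b)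
    (hf_nonneg : ∀ t ∈ Ioi b, 0 ≤ f t)
    (hmoment : IntegrableOn (fun t => t * f t) (Ioi 0 \ Icc a b) μ) :
    ∫ t in Ioo 0 a, f t * hilbertKernel ω t ∂μ ≤
      ∫ t in Ioi 0 \ Icc a b, f t * hilbertKernel ω t ∂μ := by
  refine setIntegral_Ioo_le_setIntegral_Ioi_sdiff_Icc
    (integrableOn_mul_hilbertKernel ha hω hmoment) fun t ht => ?_
  exact mul_nonneg (hf_nonneg t ht)
    (hilbertKernel_nonneg (ha.trans hω.1.le) (hω.2.trans ht).le)

theorem neg_two_div_sq_mul_setIntegral_Ioi_sdiff_Icc_le (ha : 0 ≤ a) (hω : ω ∈ Ioo a b)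
    (hf_nonpos : ∀ t ∈ Ioo 0 a, f t ≤ 0) (hf_nonneg : ∀ t ∈ Ioi b, 0 ≤ f t)
    (hmoment : IntegrableOn (fun t => t * f t) (Ioi 0 \ Icc a b) μ) :
    -(2 / ω ^ 2) * ∫ t in Ioi 0 \ Icc a b, t * f t ∂μ ≤
      ∫ t in Ioo 0 a, f t * hilbertKernel ω t ∂μ := by
  have hb : 0 ≤ b := ha.trans (hω.1.trans hω.2).le
  calc -(2 / ω ^ 2) * ∫ t in Ioi 0 \ Icc a b, t * f t ∂μ
      ≤ -(2 / ω ^ 2) * ∫ t in Ioo 0 a, t * f t ∂μ :=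
        mul_le_mul_of_nonpos_left
          (setIntegral_Ioo_le_setIntegral_Ioi_sdiff_Icc hmoment fun t ht =>
            mul_nonneg (hb.trans (mem_Ioi.1 ht).le) (hf_nonneg t ht))
          (neg_nonpos.2 (by positivity))
    _ ≤ ∫ t in Ioo 0 a, f t * hilbertKernel ω t ∂μ :=
        neg_two_div_sq_mul_setIntegral_Ioo_le hω.1.le hf_nonpos
          (hmoment.mono_set Ioo_subset_Ioi_sdiff_Icc)
          ((integrableOn_mul_hilbertKernel ha hω hmoment).mono_set Ioo_subset_Ioi_sdiff_Icc)

end SignedDensity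

theorem HI_sigma_v_lower_bound_general {a b α ω : ℝ} {μ : Measure ℝ} {v σ : ℝ → ℝ} (ha : 0 ≤ a)
    (hv : ∀ t ∈ Ioi 0 \ Icc a b, 0 ≤ v t)
    (hσ_nonpos : ∀ t ∈ Ioo 0 a, σ t ≤ 0) (hσ_nonneg : ∀ t ∈ Ioi b, 0 ≤ σ t)
    (hα : (2 / Real.pi) * (∫ t in Ioi 0 \ Icc a b, t * v t * σ t ∂μ) = α) (hα0 : α < 0)
    (hω : ω ∈ Ioo a b) :
    (1 / Real.pi) * (∫ t in Ioo 0 a, v t * σ t * hilbertKernel ω t ∂μ)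
        ≤ (1 / Real.pi) * (∫ t in Ioi 0 \ Icc a b, v t * σ t * hilbertKernel ω t ∂μ) ∧
      |α| / ω ^ 2 ≤ (1 / Real.pi) * (∫ t in Ioo 0 a, v t * σ t * hilbertKernel ω t ∂μ) := by
  have hb : 0 ≤ b := ha.trans (hω.1.trans hω.2).le
  have hleft : ∀ t ∈ Ioo 0 a, v t * σ t ≤ 0 := fun t ht =>
    mul_nonpos_of_nonneg_of_nonpos (hv t (Ioo_subset_Ioi_sdiff_Icc ht)) (hσ_nonpos t ht)
  have hright : ∀ t ∈ Ioi b, 0 ≤ v t * σ t := fun t ht =>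
    mul_nonneg (hv t (Ioi_subset_Ioi_sdiff_Icc hb ht)) (hσ_nonneg t ht)
  simp only [mul_assoc _ (v _)] at hα
  -- The Bochner integral of a non-integrable function is `0`, which `α < 0` excludes.
  have hmoment : IntegrableOn (fun t => t * (v t * σ t)) (Ioi 0 \ Icc a b) μ :=
    .of_integral_ne_zero (right_ne_zero_of_mul (hα.trans_ne hα0.ne))
  constructor
  · gcongr ?_ * ?_
    exact setIntegral_Ioo_mul_hilbertKernel_le ha hω hright hmoment
  · calc |α| / ω ^ 2
        = (1 / Real.pi) * (-(2 / ω ^ 2) * ∫ t in Ioi 0 \ Icc a b, t * (v t * σ t) ∂μ) := by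
          rw [abs_of_neg hα0, ← hα]
          ring
      _ ≤ (1 / Real.pi) * (∫ t in Ioo 0 a, v t * σ t * hilbertKernel ω t ∂μ) := by
          gcongr
          exact neg_two_div_sq_mul_setIntegral_Ioi_sdiff_Icc_le ha hω hleft hright hmoment

/-- If `v ≥ 0` on `(0,∞)∖I`, `∫_{(0,∞)∖I} v|σ| < ∞` and
`(2/π)∫_{(0,∞)∖I} t v(t) σ(t) dt = α < 0`, then for every `ω ∈ (a,b)`:
`ℋ_I(σv)(ω) ≥ (1/π)∫₀^a v(t) σ(t) 2t/(t²-ω²) dt ≥ |α|/ω²`. -/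
theorem HI_sigma_v_lower_bound (a b α : ℝ) (ha : 0 < a) (hab : a < b) (v : ℝ → ℝ)
    (hm : Measurable v)
    (hnn : ∀ t ∈ Set.Ioi 0 \ Set.Icc a b, 0 ≤ v t)
    (hint : IntegrableOn (fun t => v t * |sigmaOut a b t|) (Set.Ioi 0 \ Set.Icc a b))
    (hα : (2 / Real.pi) * (∫ t in Set.Ioi 0 \ Set.Icc a b, t * v t * sigmaOut a b t) = α)
    (hα0 : α < 0) :
    ∀ ω ∈ Set.Ioo a b,
      (1 / Real.pi) * (∫ t in Set.Ioo 0 a,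
          v t * sigmaOut a b t * (2 * t / (t ^ 2 - ω ^ 2)))
        ≤ (1 / Real.pi) * (∫ t in Set.Ioi 0 \ Set.Icc a b,
            v t * sigmaOut a b t * (2 * t / (t ^ 2 - ω ^ 2))) ∧
      |α| / ω ^ 2 ≤ (1 / Real.pi) * (∫ t in Set.Ioo 0 a,
          v t * sigmaOut a b t * (2 * t / (t ^ 2 - ω ^ 2))) :=
  fun _ => HI_sigma_v_lower_bound_general ha.le hnn (fun _ ht => sigmaOut_nonpos ht.2)
    (fun _ ht => sigmaOut_nonneg (hab.trans ht).le) hα hα0
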